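/- Let σ be a finite Borel measure on the circle ℝ/ℤ and let d ≥ 1 be a natural number. If the Fourier coefficients c_n = ∫ e^{-2πinx} dσ(x) satisfy Σ_{n ∈ ℤ} |c_n|^{2d} < ∞, then the d-fold convolution power σ^{*d} is absolutely continuous with respect to the Haar (Lebesgue) measure on the circle (indeed it has a square-integrable density). -/

import Mathlib

/-!
The Fourier coefficients of a convolution are the products of the Fourier coefficients, because
`fourier n` is a character; so those of `μ = σ^{*d}` are the `d`-th powers of those of `σ`, and
by hypothesis they are square-summable. By Riesz–Fischer (`fourierBasis` is a Hilbert basis) there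
is `F ∈ L²` with the same Fourier coefficients as `μ`. Trigonometric polynomials are uniformly
dense in the continuous functions, hence `∫ g dμ = ∫ g * conj F` for every continuous `g`.

To pass from this identity to measures, let `ν⁺` and `ν⁻` have as densities the positive and
negative parts of `Re F`. Testing against real continuous functions gives `μ + ν⁻ = ν⁺`, so
`μ ≤ ν⁺`, which is absolutely continuous.
-/

open MeasureTheory

/-- The `k`-fold convolution power of a measure `σ` on the circle:
`σ^{*0}` is the Dirac mass at `0`, and `σ^{*(k+1)} = σ^{*k} ∗ σ`. -/
noncomputable def convPow (σ : Measure (AddCircle (1 : ℝ))) : ℕ → Measure (AddCircle (1 : ℝ))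
  | 0 => Measure.dirac 0
  | k + 1 => (convPow σ k).conv σ

open AddCircle

instance isFiniteMeasure_convPow (σ : Measure (AddCircle (1 : ℝ))) [IsFiniteMeasure σ] (k : ℕ) :
    IsFiniteMeasure (convPow σ k) := by
  induction k with
  | zero => rw [convPow]; infer_instance
  | succ k ih => rw [convPow]; infer_instance

lemma integrable_continuousMap (μ : Measure (AddCircle (1 : ℝ))) [IsFiniteMeasure μ]
    (g : C(AddCircle (1 : ℝ), ℂ)) : Integrable g μ :=
  Integrable.of_bound g.continuous.aestronglyMeasurable ‖g‖ (ae_of_all _ g.norm_coe_le_norm)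

lemma integral_fourier_convPow (σ : Measure (AddCircle (1 : ℝ))) [IsFiniteMeasure σ]
    (n : ℤ) (k : ℕ) :
    ∫ x, fourier n x ∂(convPow σ k) = (∫ x, fourier n x ∂σ) ^ k := by
  induction k with
  | zero => simp [convPow]
  | succ k ih =>
    rw [convPow, integral_conv (integrable_continuousMap _ _), pow_succ, ← ih]
    have hchar : ∀ x y : AddCircle (1 : ℝ), fourier n (x + y) = fourier n x * fourier n y := by
      intro x y
      simp [fourier_apply, smul_add, toCircle_add]
    simp_rw [hchar, integral_const_mul, integral_mul_const]

/-- Riesz–Fischer for measures: a finite measure with square-summable Fourier coefficients is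
represented, on continuous functions, by an `L²` function. -/
lemma exists_L2_integral_eq (μ : Measure (AddCircle (1 : ℝ))) [IsFiniteMeasure μ]
    (h : Summable fun n : ℤ => ‖∫ x, fourier (-n) x ∂μ‖ ^ 2) :
    ∃ F : Lp ℂ 2 (haarAddCircle (T := (1 : ℝ))), ∀ g : C(AddCircle (1 : ℝ), ℂ),
      ∫ x, g x ∂μ = ∫ x, g x * (starRingEnd ℂ) (F x) ∂haarAddCircle := by
  have hmem : Memℓp (fun n : ℤ => ∫ x, fourier (-n) x ∂μ) 2 := by
    refine memℓp_gen ?_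
    simpa using h
  let F : Lp ℂ 2 (haarAddCircle (T := (1 : ℝ))) := fourierBasis.repr.symm ⟨_, hmem⟩
  have hF : ∀ n : ℤ, inner ℂ (fourierLp 2 n) F = ∫ x, fourier (-n) x ∂μ := by
    intro n
    rw [← coe_fourierBasis, ← fourierBasis.repr_apply_apply]
    simp [F]
  refine ⟨F, fun g => ?_⟩
  let L₁ : C(AddCircle (1 : ℝ), ℂ) →L[ℂ] ℂ :=
    LinearMap.mkContinuous
      { toFun := fun g => ∫ x, g x ∂μ
        map_add' := fun g₁ g₂ =>
          integral_add (integrable_continuousMap μ g₁) (integrable_continuousMap μ g₂)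
        map_smul' := fun c g => integral_smul c g }
      (μ.real Set.univ) fun g => by
        rw [mul_comm]
        exact norm_integral_le_of_norm_le_const (ae_of_all _ g.norm_coe_le_norm)
  let L₂ : C(AddCircle (1 : ℝ), ℂ) →L[ℂ] ℂ :=
    (innerSL ℂ F).comp (ContinuousMap.toLp 2 haarAddCircle ℂ)
  have hL₁ : ∀ g, L₁ g = ∫ x, g x ∂μ := fun _ => rfl
  have hL₂ : ∀ g, L₂ g = ∫ x, g x * (starRingEnd ℂ) (F x) ∂haarAddCircle := by
    intro g
    have : L₂ g = inner ℂ F (ContinuousMap.toLp 2 haarAddCircle ℂ g) := rfl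
    rw [this, L2.inner_def]
    refine integral_congr_ae ?_
    filter_upwards [ContinuousMap.coeFn_toLp (p := 2) (𝕜 := ℂ) haarAddCircle g] with x hx
    rw [hx, RCLike.inner_apply]
  have hL : L₁ = L₂ := by
    refine ContinuousLinearMap.ext_on (s := Set.range fourier) ?_ ?_
    · exact Submodule.dense_iff_topologicalClosure_eq_top.2 span_fourier_closure_eq_top
    · rintro _ ⟨n, rfl⟩
      have h₂ : L₂ (fourier n) = inner ℂ F (fourierLp 2 n) := rfl
      rw [hL₁, h₂, ← inner_conj_symm, hF, ← integral_conj]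
      simp_rw [fourier_neg, Complex.conj_conj]
  rw [← hL₁, ← hL₂, hL]

lemma absolutelyContinuous_haarAddCircle_of_summable_sq
    (μ : Measure (AddCircle (1 : ℝ))) [IsFiniteMeasure μ]
    (h : Summable fun n : ℤ => ‖∫ x, fourier (-n) x ∂μ‖ ^ 2) :
    μ ≪ haarAddCircle := by
  obtain ⟨F, hF⟩ := exists_L2_integral_eq μ h
  have hFint : Integrable F haarAddCircle := (Lp.memLp F).integrable (by norm_num)
  have hFmeas : Measurable F := (Lp.stronglyMeasurable F).measurable
  have hre : Integrable (fun x => (F x).re) haarAddCircle := hFint.re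
  let p : AddCircle (1 : ℝ) → NNReal := fun x => (F x).re.toNNReal
  let q : AddCircle (1 : ℝ) → NNReal := fun x => (-(F x).re).toNNReal
  have hp : Measurable p := by fun_prop
  have hq : Measurable q := by fun_prop
  have hpint : Integrable (fun x => (p x : ℝ)) haarAddCircle := hre.real_toNNReal
  have hqint : Integrable (fun x => (q x : ℝ)) haarAddCircle := hre.neg.real_toNNReal
  have hfin : ∀ r : AddCircle (1 : ℝ) → NNReal, Integrable (fun x => (r x : ℝ)) haarAddCircle →
      IsFiniteMeasure (haarAddCircle.withDensity fun x => (r x : ENNReal)) := by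
    intro r hr
    refine isFiniteMeasure_withDensity ?_
    have := hr.lintegral_lt_top
    simpa using this.ne
  have := hfin p hpint
  have := hfin q hqint
  have hsum : μ + haarAddCircle.withDensity (fun x => (q x : ENNReal)) =
      haarAddCircle.withDensity fun x => (p x : ENNReal) := by
    refine ext_of_forall_integral_eq_of_IsFiniteMeasure fun g => ?_
    rw [integral_add_measure (g.integrable _) (g.integrable _),
      integral_withDensity_eq_integral_smul hp, integral_withDensity_eq_integral_smul hq]
    have hmul : ∀ {u : AddCircle (1 : ℝ) → ℝ}, Integrable u haarAddCircle →
        Integrable (fun x => u x * g x) haarAddCircle := fun hu =>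
      hu.mul_bdd (c := ‖g‖) g.continuous.aestronglyMeasurable (ae_of_all _ g.norm_coe_le_norm)
    have hg : ∫ x, g x ∂μ = ∫ x, (F x).re * g x ∂haarAddCircle := by
      have hc := hF ⟨fun x => (g x : ℂ), by fun_prop⟩
      simp only [ContinuousMap.coe_mk] at hc
      rw [integral_complex_ofReal] at hc
      have hFg : Integrable (fun x => (g x : ℂ) * (starRingEnd ℂ) (F x)) haarAddCircle := by
        refine Integrable.bdd_mul (c := ‖g‖) ?_ ?_ (ae_of_all _ fun x => ?_)
        · exact (Complex.conjCLE.toContinuousLinearMap.integrable_comp hFint)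
        · exact (Complex.continuous_ofReal.comp g.continuous).aestronglyMeasurable
        · simpa using g.norm_coe_le_norm x
      have hr := congrArg Complex.re hc
      rw [Complex.ofReal_re] at hr
      rw [hr]
      have := integral_re hFg
      simp only [RCLike.re_eq_complex_re] at this
      rw [← this]
      simp [mul_comm]
    rw [hg]
    simp only [NNReal.smul_def, smul_eq_mul]
    rw [← integral_add (hmul hre) (hmul hqint)]
    refine integral_congr_ae (ae_of_all _ fun x => ?_)
    have hpq : (p x : ℝ) - q x = (F x).re := by
      simp only [p, q, Real.coe_toNNReal']
      exact max_zero_sub_eq_self _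
    simp only [← hpq]
    ring
  have hle : μ ≤ haarAddCircle.withDensity fun x => (p x : ENNReal) := by
    rw [← hsum]
    exact Measure.le_add_right le_rfl
  exact hle.absolutelyContinuous.trans (withDensity_absolutelyContinuous _ _)

/-- If the Fourier coefficients `c n = ∫ e^{-2πinx} dσ(x)` of a finite measure `σ` on the
circle satisfy `∑ |c n|^{2d} < ∞`, then the convolution power `σ^{*d}` is absolutely
continuous with respect to the Haar (Lebesgue) measure on the circle. -/
theorem convPow_absolutelyContinuous_of_summable_pow_fourierCoeff
    (σ : Measure (AddCircle (1 : ℝ))) [IsFiniteMeasure σ] (d : ℕ) (hd : 1 ≤ d)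
    (hsum : Summable fun n : ℤ => ‖∫ x, fourier (-n) x ∂σ‖ ^ (2 * d)) :
    (convPow σ d) ≪ (volume : Measure (AddCircle (1 : ℝ))) := by
  have hcoeff : Summable fun n : ℤ => ‖∫ x, fourier (-n) x ∂(convPow σ d)‖ ^ 2 := by
    refine hsum.congr fun n => ?_
    rw [integral_fourier_convPow, norm_pow, ← pow_mul, mul_comm]
  have hac := absolutelyContinuous_haarAddCircle_of_summable_sq (convPow σ d) hcoeff
  have hvol : (volume : Measure (AddCircle (1 : ℝ))) = AddCircle.haarAddCircle := by
    rw [AddCircle.volume_eq_smul_haarAddCircle, ENNReal.ofReal_one, one_smul]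
  rwa [hvol]
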